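/- ∫₀^{π/2} ∫₀^{π/2} sin²φ · √(sin²θ · sin²φ + cos²φ) dθ dφ = ∫₀^{∞} ( t²/(1+t²)^{5/2} ) · ( ∫₀^{π/2} √(1 + t² sin²θ) dθ ) dt. -/

import Mathlib

open Real

/-!
Under `φ = arctan t` the measure `dφ` and the factor `sin² φ` each contribute a power `1` of
`1 + t²` to the denominator, and the square root contributes a power `1 / 2`; together they give the
exponent `5 / 2`.
-/

open Set MeasureTheory

theorem image_arctan_Ioi (a : ℝ) : arctan '' Ioi a = Ioo (arctan a) (π / 2) := by
  ext φ
  constructor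
  · rintro ⟨t, ht, rfl⟩
    exact ⟨arctan_strictMono ht, arctan_lt_pi_div_two t⟩
  · rintro ⟨ha, hφ⟩
    obtain ⟨t, rfl⟩ : φ ∈ range arctan :=
      range_arctan ▸ ⟨(neg_pi_div_two_lt_arctan a).trans ha, hφ⟩
    exact ⟨t, arctan_lt_arctan_iff.mp ha, rfl⟩

theorem integral_arctan_pi_div_two_eq_integral_Ioi {E : Type*} [NormedAddCommGroup E]
    [NormedSpace ℝ E] (f : ℝ → E) (a : ℝ) :
    ∫ φ in arctan a..π / 2, f φ = ∫ t in Ioi a, (1 + t ^ 2)⁻¹ • f (arctan t) := by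
  rw [intervalIntegral.integral_of_le (arctan_lt_pi_div_two a).le, integral_Ioc_eq_integral_Ioo,
    ← image_arctan_Ioi]
  exact integral_image_eq_integral_deriv_smul_of_monotoneOn measurableSet_Ioi
    (fun t _ ↦ (hasDerivAt_arctan' t).hasDerivWithinAt) (arctan_mono.monotoneOn _) f

theorem sqrt_mul_sin_sq_arctan_add_cos_sq_arctan (k t : ℝ) :
    √(k * sin (arctan t) ^ 2 + cos (arctan t) ^ 2) = √(1 + t ^ 2 * k) / √(1 + t ^ 2) := by
  rw [← sqrt_div' _ (by positivity), sin_sq_arctan, cos_sq_arctan]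
  congr 1
  ring

theorem rpow_five_halves_eq_sq_mul_sqrt {x : ℝ} (hx : 0 ≤ x) : x ^ (5 / 2 : ℝ) = x ^ 2 * √x := by
  calc x ^ (5 / 2 : ℝ) = √x ^ 5 := by rw [rpow_div_two_eq_sqrt _ hx]; norm_cast
    _ = (√x ^ 2) ^ 2 * √x := by ring
    _ = x ^ 2 * √x := by rw [sq_sqrt hx]

/-- The substitution `t = tan φ` transforms the 'hard' integral of the 3-dimensional
case into an integral of the complete elliptic integral of the second kind with
imaginary modulus:
`∫₀^{π/2}∫₀^{π/2} sin²φ √(sin²θ sin²φ + cos²φ) dθ dφ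
  = ∫₀^∞ t²/(1+t²)^{5/2} E(it) dt`. -/
theorem hard_integral_3d_elliptic_form :
    (∫ φ in (0:ℝ)..(π/2), ∫ θ in (0:ℝ)..(π/2),
        Real.sin φ ^ 2 * Real.sqrt (Real.sin θ ^ 2 * Real.sin φ ^ 2 + Real.cos φ ^ 2))
    = ∫ t in Set.Ioi (0:ℝ),
        (t ^ 2 / (1 + t ^ 2) ^ ((5:ℝ)/2)) *
          ∫ θ in (0:ℝ)..(π/2), Real.sqrt (1 + t ^ 2 * Real.sin θ ^ 2) := by
  calc
    _ = ∫ t in Ioi (0 : ℝ), (1 + t ^ 2)⁻¹ * ∫ θ in (0 : ℝ)..(π / 2),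
          sin (arctan t) ^ 2 * √(sin θ ^ 2 * sin (arctan t) ^ 2 + cos (arctan t) ^ 2) := by
      simpa only [arctan_zero, smul_eq_mul] using integral_arctan_pi_div_two_eq_integral_Ioi
        (fun φ ↦ ∫ θ in (0 : ℝ)..(π / 2),
          sin φ ^ 2 * √(sin θ ^ 2 * sin φ ^ 2 + cos φ ^ 2)) 0
    _ = ∫ t in Ioi (0 : ℝ), (1 + t ^ 2)⁻¹ * (t ^ 2 / (1 + t ^ 2) *
          ((∫ θ in (0 : ℝ)..(π / 2), √(1 + t ^ 2 * sin θ ^ 2)) / √(1 + t ^ 2))) := by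
      simp only [sqrt_mul_sin_sq_arctan_add_cos_sq_arctan, intervalIntegral.integral_const_mul,
        intervalIntegral.integral_div]
      simp only [sin_sq_arctan]
    _ = _ := by
      congr 1 with t
      rw [rpow_five_halves_eq_sq_mul_sqrt (by positivity)]
      field_simp
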